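/- arXiv:1203.4450 — 2 statements merged into one kernel-verified Lean document; each statement's English description precedes it below -/
import Mathlib

section
/- Let (R,m) be a Noetherian local ring and let I = (x_1,…,x_s,y) be an ideal of R. Suppose that for all n ≥ 2 and all i = 1,…,s one has ((x_1,…,x_{i-1})I^{n-1} : x_i) ∩ I^{n-1} = (x_1,…,x_{i-1})I^{n-2}. Then for every integer p ≥ 2 the following conditions are equivalent: (i) α_{I,p} : Sym_p(I) → I^p is an isomorphism; (ii) α_{I,n} : Sym_n(I) → I^n is an isomorphism for each 2 ≤ n ≤ p. -/
open scoped TensorProduct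
open PiTensorProduct

section SymDefs

variable (R : Type*) [CommRing R]

/-- The `n`-fold tensor power of (the `R`-module underlying) the ideal `I`. -/
abbrev TensPow (I : Ideal R) (n : ℕ) : Type _ := ⨂[R] (_ : Fin n), ↥I

/-- The multilinear "product" map `(v₁,…,vₙ) ↦ v₁⋯vₙ : Iⁿ ⊆ R`. -/
noncomputable def prodML (I : Ideal R) (n : ℕ) :
    MultilinearMap R (fun _ : Fin n => ↥I) R :=
  (MultilinearMap.mkPiAlgebra R (Fin n) R).compLinearMap fun _ => I.subtype

/-- The symmetrizer relations in the `n`-th tensor power of `I`. -/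
noncomputable def symRel (I : Ideal R) (n : ℕ) : Submodule R (TensPow R I n) :=
  Submodule.span R {z | ∃ (v : Fin n → ↥I) (σ : Equiv.Perm (Fin n)),
    z = tprod R v - tprod R (v ∘ σ)}

/-- The `n`-th symmetric power `Symⁿ(I)` of the ideal `I`, i.e. the `n`-th graded
component of the symmetric algebra of the `R`-module `I`. -/
abbrev SymPow (I : Ideal R) (n : ℕ) : Type _ := TensPow R I n ⧸ symRel R I n

/-- The `n`-th component `α_{I,n} : Symₙ(I) → Iⁿ ⊆ R` of the canonical morphism
`α_I : Sym(I) → R(I)` (composed with the inclusion `Iⁿ ⊆ R`; it is an isomorphism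
onto `Iⁿ` iff it is injective as a map to `R`). -/
noncomputable def alphaCan (I : Ideal R) (n : ℕ) : SymPow R I n →ₗ[R] R :=
  Submodule.liftQ (symRel R I n) (PiTensorProduct.lift (prodML R I n)) (by
    rw [symRel, Submodule.span_le]
    rintro z ⟨v, σ, rfl⟩
    simp only [SetLike.mem_coe, LinearMap.mem_ker, map_sub, PiTensorProduct.lift.tprod]
    have : prodML R I n (v ∘ σ) = prodML R I n v := by
      simp only [prodML, MultilinearMap.compLinearMap_apply,
        MultilinearMap.mkPiAlgebra_apply, Function.comp_apply]
      exact Equiv.prod_comp σ fun i => ((v i : R))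
    rw [this, sub_self])

end SymDefs

/-!
Let `J = (x₁,…,xₛ)`. Then `I / J` is generated by the class of `y`, so in every positive degree
`Sym(I / J)` is the quotient `R / (J : y)`, on which multiplication by `y` is bijective.

Let `1 ≤ n ≤ p` and let `α_{I,p}` be injective. If `F ∈ Symₙ(I)` is killed by `α_{I,n}`, then
`y^(p-n) F` is killed by `α_{I,p}`, hence vanishes. So `F` vanishes in `Symₙ(I / J)`, which means
`F ∈ J · Symₙ₋₁(I)`. On the other hand, for `n ≥ 2` the colon conditions and the injectivity of
`α_{I,n-1}` imply that `α_{I,n}` is injective on `J · Symₙ₋₁(I)`, by adjoining `x₁, …, xₛ` one at a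
time: if `F' + xᵢ G ↦ 0` with `F' ∈ (x₁,…,xᵢ₋₁) · Symₙ₋₁(I)`, then
`G ∈ (x₁,…,xᵢ₋₁) · Symₙ₋₂(I)`, so `xᵢ G` lies in `(x₁,…,xᵢ₋₁) · Symₙ₋₁(I)` as well.
-/

/-- The nontrivial inclusion of the colon condition `(𝒯ₙ)` for the sequence `x`, where `n = m + 2`;
the shift avoids truncated subtraction in the exponents `n - 1` and `n - 2`. -/
def ColonCondition {R : Type*} [CommRing R] (I : Ideal R) {s : ℕ} (x : Fin s → R)
    (m : ℕ) : Prop :=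
  ∀ i, (Ideal.span (x '' {j | j < i}) * I ^ (m + 1)).colon (Ideal.span {x i}) ⊓ I ^ (m + 1) ≤
    Ideal.span (x '' {j | j < i}) * I ^ m

section CyclicQuotient

variable {R M : Type*} [CommRing R] [AddCommGroup M] [Module R M]

theorem exists_linearMap_quotient_ker_eq (N : Submodule R M) (y : M)
    (hN : N ⊔ Submodule.span R {y} = ⊤) :
    ∃ (K : Ideal R) (f : M →ₗ[R] R ⧸ K), f y = 1 ∧ LinearMap.ker f = N := by
  let g : R →ₗ[R] M ⧸ N := N.mkQ ∘ₗ LinearMap.toSpanSingleton R M y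
  have g_surjective : Function.Surjective g := by
    rw [← LinearMap.range_eq_top, LinearMap.range_comp, LinearMap.range_toSpanSingleton,
      Submodule.map_mkQ_eq_top, hN]
  let e := g.quotKerEquivOfSurjective g_surjective
  have e_one : e 1 = N.mkQ y := by
    change g 1 = _
    simp [g]
  refine ⟨LinearMap.ker g, e.symm.toLinearMap ∘ₗ N.mkQ, ?_, ?_⟩
  · exact e.symm_apply_eq.2 e_one.symm
  · rw [LinearEquiv.ker_comp, Submodule.ker_mkQ]

theorem ker_sup_span_singleton_eq_top {A : Type*} [CommRing A] [Algebra R A]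
    (hA : Function.Surjective (algebraMap R A)) {f : M →ₗ[R] A} {y : M} (hy : f y = 1) :
    LinearMap.ker f ⊔ Submodule.span R {y} = ⊤ := by
  refine eq_top_iff.2 fun a _ => ?_
  obtain ⟨c, hc⟩ := hA (f a)
  refine Submodule.mem_sup.2 ⟨a - c • y, ?_, c • y, ?_, sub_add_cancel _ _⟩
  · rw [LinearMap.mem_ker, map_sub, map_smul, hy, ← Algebra.algebraMap_eq_smul_one, hc, sub_self]
  · exact Submodule.smul_mem _ _ (Submodule.mem_span_singleton_self y)

end CyclicQuotient

namespace SymPow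

variable {R : Type*} [CommRing R] {I : Ideal R} {n : ℕ}

section UniversalProperty

variable {P : Type*} [AddCommGroup P] [Module R P]

/-- The universal symmetric multilinear map `(v₁,…,vₙ) ↦ v₁⋯vₙ` into `Symₙ(I)`. -/
noncomputable def tprod : MultilinearMap R (fun _ : Fin n => I) (SymPow R I n) :=
  (symRel R I n).mkQ.compMultilinearMap (PiTensorProduct.tprod R)

theorem tprod_comp_perm (v : Fin n → I) (σ : Equiv.Perm (Fin n)) :
    tprod (v ∘ σ) = tprod v :=
  ((Submodule.Quotient.eq (symRel R I n)).2 (Submodule.subset_span ⟨v, σ, rfl⟩)).symm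

theorem span_range_tprod :
    Submodule.span R (Set.range (tprod : MultilinearMap R (fun _ : Fin n => I) _)) = ⊤ := by
  rw [tprod, LinearMap.coe_compMultilinearMap, Set.range_comp, Submodule.span_image,
    PiTensorProduct.span_tprod_eq_top, Submodule.map_top, Submodule.range_mkQ]

theorem linearMap_ext {f g : SymPow R I n →ₗ[R] P} (h : ∀ v, f (tprod v) = g (tprod v)) :
    f = g :=
  LinearMap.ext_on_range span_range_tprod h

/-- The linear map out of `Symₙ(I)` induced by a symmetric multilinear map on `I`. -/
noncomputable def lift (f : MultilinearMap R (fun _ : Fin n => I) P)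
    (hf : ∀ (v : Fin n → I) (σ : Equiv.Perm (Fin n)), f (v ∘ σ) = f v) :
    SymPow R I n →ₗ[R] P :=
  (symRel R I n).liftQ (PiTensorProduct.lift f) <| Submodule.span_le.2 <| by
    rintro _ ⟨v, σ, rfl⟩
    simp [hf]

theorem lift_tprod (f : MultilinearMap R (fun _ : Fin n => I) P) (hf) (v : Fin n → I) :
    lift f hf (tprod v) = f v :=
  (Submodule.liftQ_apply _ _ _).trans (PiTensorProduct.lift.tprod v)

end UniversalProperty

section Multiplication

theorem tprod_curryLeft_comp_perm (a : I) (v : Fin n → I) (σ : Equiv.Perm (Fin n)) :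
    tprod.curryLeft a (v ∘ σ) = tprod.curryLeft a v := by
  rw [MultilinearMap.curryLeft_apply, MultilinearMap.curryLeft_apply,
    ← tprod_comp_perm (Fin.cons a v) (Equiv.Perm.decomposeFin.symm (0, σ))]
  congr 1
  funext i
  cases i using Fin.cases <;> simp

/-- The multiplication `I × Symₙ(I) → Symₙ₊₁(I)` of the symmetric algebra. -/
noncomputable def mulLeft : I →ₗ[R] SymPow R I n →ₗ[R] SymPow R I (n + 1) where
  toFun a := lift (tprod.curryLeft a) (tprod_curryLeft_comp_perm a)
  map_add' a b := linearMap_ext fun v => by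
    simp only [LinearMap.add_apply, lift_tprod, map_add, add_apply]
  map_smul' r a := linearMap_ext fun v => by
    simp only [LinearMap.smul_apply, lift_tprod, map_smul, smul_apply, RingHom.id_apply]

theorem mulLeft_tprod (a : I) (v : Fin n → I) :
    mulLeft a (tprod v) = tprod (Fin.cons a v : Fin (n + 1) → I) :=
  lift_tprod _ (tprod_curryLeft_comp_perm a) v

theorem mulLeft_tprod_const (a : I) :
    mulLeft a (tprod fun _ : Fin n => a) = tprod fun _ : Fin (n + 1) => a := by
  rw [mulLeft_tprod]
  exact congrArg tprod (Fin.cons_self_tail fun _ : Fin (n + 1) => a)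

theorem mulLeft_comm (a b : I) (F : SymPow R I n) :
    mulLeft a (mulLeft b F) = mulLeft b (mulLeft a F) := by
  suffices mulLeft a ∘ₗ mulLeft b = mulLeft b ∘ₗ mulLeft (n := n) a from
    LinearMap.congr_fun this F
  refine linearMap_ext fun v => ?_
  simp only [LinearMap.comp_apply, mulLeft_tprod]
  rw [← tprod_comp_perm _ (Equiv.swap 0 1)]
  congr 1
  funext i
  refine Fin.cases (by simp [Fin.cons_one]) (Fin.cases (by simp) fun j => ?_) i
  have swap_fixes : Equiv.swap (0 : Fin (n + 2)) 1 j.succ.succ = j.succ.succ :=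
    Equiv.swap_apply_of_ne_of_ne (Fin.succ_ne_zero _)
      fun h => Fin.succ_ne_zero j (Fin.succ_injective _ h)
  simp [swap_fixes]

theorem map₂_mulLeft_top_top :
    Submodule.map₂ (mulLeft (I := I) (n := n)) ⊤ ⊤ = ⊤ := by
  rw [eq_top_iff, ← span_range_tprod, Submodule.span_le]
  rintro _ ⟨v, rfl⟩
  rw [← Fin.cons_self_tail v, ← mulLeft_tprod]
  exact Submodule.apply_mem_map₂ _ Submodule.mem_top Submodule.mem_top

end Multiplication

section MulSubmodule

/-- The submodule `N · Symₙ(I)` of `Symₙ₊₁(I)`, for a submodule `N` of `I`. -/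
noncomputable def mulSubmodule (N : Submodule R I) (n : ℕ) : Submodule R (SymPow R I (n + 1)) :=
  Submodule.map₂ mulLeft N ⊤

theorem mulLeft_mem_mulSubmodule {N : Submodule R I} {a : I} (ha : a ∈ N) (G : SymPow R I n) :
    mulLeft a G ∈ mulSubmodule N n :=
  Submodule.apply_mem_map₂ _ ha Submodule.mem_top

theorem map_mulLeft_mulSubmodule_le (N : Submodule R I) (a : I) :
    (mulSubmodule N n).map (mulLeft a) ≤ mulSubmodule N (n + 1) := by
  rw [Submodule.map_le_iff_le_comap, mulSubmodule, Submodule.map₂_le]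
  intro b hb G _
  rw [Submodule.mem_comap, mulLeft_comm]
  exact mulLeft_mem_mulSubmodule hb _

theorem mulSubmodule_sup_span_singleton (N : Submodule R I) (a : I) :
    mulSubmodule (N ⊔ Submodule.span R {a}) n =
      mulSubmodule N n ⊔ LinearMap.range (mulLeft (n := n) a) := by
  rw [mulSubmodule, Submodule.map₂_sup_left, Submodule.map₂_span_singleton_eq_map,
    Submodule.map_top, ← mulSubmodule]

theorem span_tprod_zero (v : Fin 0 → I) : Submodule.span R {tprod v} = ⊤ := by
  rw [← span_range_tprod, Set.range_eq_singleton fun w => congrArg tprod (Subsingleton.elim w v)]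

theorem mulSubmodule_sup_span_tprod_const {N : Submodule R I} {y : I}
    (hN : N ⊔ Submodule.span R {y} = ⊤) (n : ℕ) :
    mulSubmodule N n ⊔ Submodule.span R {tprod fun _ => y} = ⊤ := by
  have split (n : ℕ) : mulSubmodule N n ⊔ LinearMap.range (mulLeft (n := n) y) = ⊤ := by
    rw [← mulSubmodule_sup_span_singleton, hN, mulSubmodule, map₂_mulLeft_top_top]
  rw [eq_top_iff, ← split n]
  refine sup_le le_sup_left ?_
  rw [LinearMap.range_eq_map]
  cases n with
  | zero =>
    rw [← span_tprod_zero fun _ => y, Submodule.map_span, Set.image_singleton,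
      mulLeft_tprod_const]
    exact le_sup_right
  | succ n =>
    rw [← mulSubmodule_sup_span_tprod_const hN n, Submodule.map_sup, Submodule.map_span,
      Set.image_singleton, mulLeft_tprod_const]
    exact sup_le_sup_right (map_mulLeft_mulSubmodule_le N y) _

end MulSubmodule

section Eval

variable {A : Type*} [CommRing A] [Algebra R A]

/-- The degree `n` component of the algebra homomorphism `Sym(I) → A` induced by a linear map
`I → A`. -/
noncomputable def eval (f : I →ₗ[R] A) (n : ℕ) : SymPow R I n →ₗ[R] A :=
  lift ((MultilinearMap.mkPiAlgebra R (Fin n) A).compLinearMap fun _ => f) fun v σ =>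
    Equiv.prod_comp σ fun i => f (v i)

theorem eval_tprod (f : I →ₗ[R] A) (v : Fin n → I) : eval f n (tprod v) = ∏ i, f (v i) :=
  lift_tprod _ _ v

theorem eval_mulLeft (f : I →ₗ[R] A) (a : I) (F : SymPow R I n) :
    eval f (n + 1) (mulLeft a F) = f a * eval f n F := by
  suffices eval f (n + 1) ∘ₗ mulLeft a = LinearMap.mulLeft R (f a) ∘ₗ eval f n from
    LinearMap.congr_fun this F
  exact linearMap_ext fun v => by simp [mulLeft_tprod, eval_tprod, Fin.prod_univ_succ]

theorem map_eval_mulSubmodule (f : I →ₗ[R] A) (N : Submodule R I) :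
    (mulSubmodule N n).map (eval f (n + 1)) = N.map f * LinearMap.range (eval f n) := by
  have eval_compr₂_mulLeft :
      mulLeft.compr₂ (eval f (n + 1)) = (LinearMap.mul R A).compl₁₂ f (eval f n) :=
    LinearMap.ext₂ fun a F => eval_mulLeft f a F
  rw [mulSubmodule, Submodule.map_map₂, eval_compr₂_mulLeft, ← Submodule.map₂_map_map,
    Submodule.map_top, ← Submodule.mul_eq_map₂]

theorem range_eval (f : I →ₗ[R] A) (n : ℕ) :
    LinearMap.range (eval f n) = LinearMap.range f ^ n := by
  induction n with
  | zero =>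
    rw [LinearMap.range_eq_map, ← span_tprod_zero Fin.elim0, Submodule.map_span,
      Set.image_singleton, eval_tprod, Fin.prod_univ_zero, pow_zero, Submodule.one_eq_span]
  | succ n ih =>
    rw [LinearMap.range_eq_map, ← map₂_mulLeft_top_top, ← mulSubmodule, map_eval_mulSubmodule,
      ih, Submodule.map_top, pow_succ']

theorem ker_eval_le_mulSubmodule (hA : Function.Surjective (algebraMap R A)) {f : I →ₗ[R] A}
    {y : I} (hy : f y = 1) (n : ℕ) :
    LinearMap.ker (eval f (n + 1)) ≤ mulSubmodule (LinearMap.ker f) n := by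
  have mulSubmodule_le_ker : mulSubmodule (LinearMap.ker f) n ≤ LinearMap.ker (eval f (n + 1)) := by
    rw [LinearMap.le_ker_iff_map, map_eval_mulSubmodule, LinearMap.le_ker_iff_map.1 le_rfl,
      Submodule.bot_mul]
  intro F hF
  have F_mem_sup : F ∈ mulSubmodule (LinearMap.ker f) n ⊔ Submodule.span R {tprod fun _ => y} := by
    rw [mulSubmodule_sup_span_tprod_const (ker_sup_span_singleton_eq_top hA hy)]
    exact Submodule.mem_top
  obtain ⟨F', hF', _, hc, rfl⟩ := Submodule.mem_sup.1 F_mem_sup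
  obtain ⟨c, rfl⟩ := Submodule.mem_span_singleton.1 hc
  have eval_F' : eval f (n + 1) F' = 0 := mulSubmodule_le_ker hF'
  have c_smul_y_mem : c • y ∈ LinearMap.ker f := by
    rw [LinearMap.mem_ker, map_smul, hy]
    simpa [eval_F', eval_tprod, hy] using hF
  refine add_mem hF' ?_
  rw [← mulLeft_tprod_const, ← LinearMap.smul_apply, ← map_smul]
  exact mulLeft_mem_mulSubmodule c_smul_y_mem _

theorem ker_eval_le_ker_eval_of_le {B : Type*} [CommRing B] [Algebra R B] {f : I →ₗ[R] A}
    {g : I →ₗ[R] B} {y : I} (hy : g y = 1) {n p : ℕ} (hnp : n ≤ p)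
    (hp : LinearMap.ker (eval f p) ≤ LinearMap.ker (eval g p)) :
    LinearMap.ker (eval f n) ≤ LinearMap.ker (eval g n) := by
  induction hnp using Nat.decreasingInduction with
  | self => exact hp
  | of_succ n _ ih =>
    intro F hF
    have mul_mem : mulLeft y F ∈ LinearMap.ker (eval f (n + 1)) := by
      rw [LinearMap.mem_ker, eval_mulLeft, LinearMap.mem_ker.1 hF, mul_zero]
    simpa [eval_mulLeft, hy] using ih mul_mem

end Eval

section AlphaCan

theorem alphaCan_eq_eval (I : Ideal R) (n : ℕ) : alphaCan R I n = eval I.subtype n :=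
  rfl

theorem alphaCan_mulLeft (a : I) (F : SymPow R I n) :
    alphaCan R I (n + 1) (mulLeft a F) = a * alphaCan R I n F :=
  eval_mulLeft _ a F

theorem range_alphaCan (I : Ideal R) (n : ℕ) : LinearMap.range (alphaCan R I n) = I ^ n := by
  rw [alphaCan_eq_eval, range_eval, Submodule.range_subtype]

theorem map_alphaCan_mulSubmodule (N : Submodule R I) (n : ℕ) :
    (mulSubmodule N n).map (alphaCan R I (n + 1)) = N.map I.subtype * I ^ n := by
  rw [← range_alphaCan]
  exact map_eval_mulSubmodule _ N

theorem alphaCan_one_injective (I : Ideal R) : Function.Injective (alphaCan R I 1) := by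
  have alphaCan_comp_mkQ : alphaCan R I 1 ∘ₗ (symRel R I 1).mkQ =
      I.subtype ∘ₗ (PiTensorProduct.subsingletonEquiv (0 : Fin 1)).toLinearMap :=
    PiTensorProduct.ext <| MultilinearMap.ext fun v => by simp [alphaCan, prodML]
  refine Function.Injective.of_comp_right ?_ (Submodule.mkQ_surjective _)
  rw [← LinearMap.coe_comp, alphaCan_comp_mkQ]
  exact I.injective_subtype.comp (LinearEquiv.injective _)

theorem disjoint_mulSubmodule_sup_span_singleton_ker {N : Submodule R I} {a : I} {m : ℕ}
    (hcolon : (N.map I.subtype * I ^ (m + 1)).colon (Ideal.span {(a : R)}) ⊓ I ^ (m + 1) ≤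
      N.map I.subtype * I ^ m)
    (hinj : Function.Injective (alphaCan R I (m + 1)))
    (hN : Disjoint (mulSubmodule N (m + 1)) (LinearMap.ker (alphaCan R I (m + 2)))) :
    Disjoint (mulSubmodule (N ⊔ Submodule.span R {a}) (m + 1))
      (LinearMap.ker (alphaCan R I (m + 2))) := by
  rw [LinearMap.disjoint_ker] at hN ⊢
  intro F hF F_eq_zero
  rw [mulSubmodule_sup_span_singleton] at hF
  obtain ⟨F', hF', _, ⟨G, rfl⟩, rfl⟩ := Submodule.mem_sup.1 hF
  have mul_alpha_G_mem : (a : R) * alphaCan R I (m + 1) G ∈ N.map I.subtype * I ^ (m + 1) := by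
    rw [map_add, alphaCan_mulLeft] at F_eq_zero
    rw [eq_neg_of_add_eq_zero_right F_eq_zero, neg_mem_iff, ← map_alphaCan_mulSubmodule]
    exact Submodule.mem_map_of_mem hF'
  have alpha_G_mem : alphaCan R I (m + 1) G ∈ N.map I.subtype * I ^ m := by
    refine hcolon ⟨Ideal.mem_colon_span_singleton.2 ?_, ?_⟩
    · rwa [mul_comm (alphaCan R I (m + 1) G)]
    · exact range_alphaCan I (m + 1) ▸ LinearMap.mem_range_self _ G
  have G_mem : G ∈ mulSubmodule N m := by
    rw [← map_alphaCan_mulSubmodule] at alpha_G_mem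
    obtain ⟨H, hH, alpha_H⟩ := alpha_G_mem
    exact hinj alpha_H ▸ hH
  exact hN _ (add_mem hF' (map_mulLeft_mulSubmodule_le N a (Submodule.mem_map_of_mem G_mem)))
    F_eq_zero

theorem disjoint_mulSubmodule_span_range_ker {s m : ℕ} {x : Fin s → I}
    (hcolon : ColonCondition I (fun j => (x j : R)) m)
    (hinj : Function.Injective (alphaCan R I (m + 1))) :
    Disjoint (mulSubmodule (Submodule.span R (Set.range x)) (m + 1))
      (LinearMap.ker (alphaCan R I (m + 2))) := by
  suffices ∀ k : Fin (s + 1),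
      Disjoint (mulSubmodule (Submodule.span R (x '' {j | j.castSucc < k})) (m + 1))
        (LinearMap.ker (alphaCan R I (m + 2))) by
    simpa [Fin.castSucc_lt_last] using this (Fin.last s)
  intro k
  induction k using Fin.induction with
  | zero => simp [mulSubmodule]
  | succ i ih =>
    have image_succ : x '' {j | j.castSucc < i.succ} = x '' Set.Iio i ∪ {x i} := by
      simp only [Fin.castSucc_lt_succ_iff]
      change x '' Set.Iic i = _
      rw [← Set.Iio_insert, Set.image_insert_eq, Set.insert_eq, Set.union_comm]
    rw [image_succ, Submodule.span_union]
    refine disjoint_mulSubmodule_sup_span_singleton_ker ?_ hinj ih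
    rw [Submodule.map_span, Set.image_image]
    exact hcolon i

theorem alphaCan_injective_of_le {s m p : ℕ} {x : Fin s → I} {y : I}
    (hgen : Submodule.span R (Set.range x) ⊔ Submodule.span R {y} = ⊤)
    (hcolon : ColonCondition I (fun j => (x j : R)) m)
    (hinj : Function.Injective (alphaCan R I (m + 1)))
    (hmp : m + 2 ≤ p) (hp : Function.Injective (alphaCan R I p)) :
    Function.Injective (alphaCan R I (m + 2)) := by
  obtain ⟨K, f, hfy, ker_f⟩ := exists_linearMap_quotient_ker_eq _ y hgen
  have ker_le_ker_eval : LinearMap.ker (alphaCan R I (m + 2)) ≤ LinearMap.ker (eval f (m + 2)) :=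
    ker_eval_le_ker_eval_of_le hfy hmp ((LinearMap.ker_eq_bot.2 hp).trans_le bot_le)
  have ker_eval_le : LinearMap.ker (eval f (m + 2)) ≤
      mulSubmodule (Submodule.span R (Set.range x)) (m + 1) :=
    ker_f ▸ ker_eval_le_mulSubmodule Ideal.Quotient.mk_surjective hfy (m + 1)
  rw [← LinearMap.ker_eq_bot, ← disjoint_self]
  exact (disjoint_mulSubmodule_span_range_ker hcolon hinj).mono_left
    (ker_le_ker_eval.trans ker_eval_le)

theorem alphaCan_injective_of_forall_colonCondition {s p : ℕ} {x : Fin s → I} {y : I}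
    (hgen : Submodule.span R (Set.range x) ⊔ Submodule.span R {y} = ⊤)
    (hcolon : ∀ m, m + 2 ≤ p → ColonCondition I (fun j => (x j : R)) m)
    (hp : Function.Injective (alphaCan R I p)) :
    ∀ m, m + 1 ≤ p → Function.Injective (alphaCan R I (m + 1))
  | 0, _ => alphaCan_one_injective I
  | m + 1, hm => alphaCan_injective_of_le hgen (hcolon m hm)
      (alphaCan_injective_of_forall_colonCondition hgen hcolon hp m (by lia)) hm hp

end AlphaCan

end SymPow

theorem statement17_general {R : Type*} [CommRing R] {s : ℕ} (x : Fin s → R) (y : R)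
    (I : Ideal R) (hI : I = Ideal.span (Set.range (Fin.snoc x y))) {p : ℕ}
    (hT : ∀ n, 2 ≤ n → n ≤ p → ∀ i : Fin s,
      (Ideal.span (x '' {j | j < i}) * I ^ (n - 1)).colon (Ideal.span {x i}) ⊓ I ^ (n - 1)
        ≤ Ideal.span (x '' {j | j < i}) * I ^ (n - 2)) (hp : 2 ≤ p) :
    Function.Injective (alphaCan R I p) ↔
      ∀ n, 2 ≤ n → n ≤ p → Function.Injective (alphaCan R I n) := by
  refine ⟨fun hinj n hn hnp => ?_, fun h => h p hp le_rfl⟩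
  rw [Fin.range_snoc] at hI
  have x_mem (j : Fin s) : x j ∈ I := hI ▸ Ideal.subset_span (by simp)
  have y_mem : y ∈ I := hI ▸ Ideal.subset_span (by simp)
  lift x to Fin s → I using x_mem
  lift y to I using y_mem
  have hgen : Submodule.span R (Set.range x) ⊔ Submodule.span R {y} = ⊤ := by
    apply Submodule.map_injective_of_injective I.injective_subtype
    rw [← Submodule.span_union, Submodule.map_span, Submodule.map_top, Submodule.range_subtype,
      Set.image_union, ← Set.range_comp, Set.image_singleton, Set.union_singleton]
    exact hI.symm
  have hcolon (m : ℕ) (hm : m + 2 ≤ p) : ColonCondition I (fun j => (x j : R)) m :=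
    hT (m + 2) (by lia) hm
  obtain ⟨m, rfl⟩ : ∃ m, n = m + 1 := ⟨n - 1, by lia⟩
  exact SymPow.alphaCan_injective_of_forall_colonCondition hgen hcolon hinj m hnp

/-- Let `(R,m)` be Noetherian local and `I = (x₁,…,xₛ,y)`.  If the conditions `(𝒯ₙ)`
hold for all `n ≥ 2`, then for every `p ≥ 2`: `α_{I,p}` is an isomorphism iff
`α_{I,n}` is an isomorphism for each `2 ≤ n ≤ p`. -/
theorem statement17 {R : Type*} [CommRing R] [IsNoetherianRing R] [IsLocalRing R]
    {s : ℕ} (x : Fin s → R) (y : R)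
    (I : Ideal R) (hI : I = Ideal.span (Set.range (Fin.snoc x y)))
    (hT : ∀ n, 2 ≤ n → ∀ i : Fin s,
      (Ideal.span (x '' {j | j < i}) * I ^ (n - 1)).colon (Ideal.span {x i}) ⊓ I ^ (n - 1)
        = Ideal.span (x '' {j | j < i}) * I ^ (n - 2)) :
    ∀ p, 2 ≤ p →
      (Function.Injective (alphaCan R I p) ↔
        ∀ n, 2 ≤ n → n ≤ p → Function.Injective (alphaCan R I n)) := by
  intro p hp
  exact statement17_general x y I hI (fun n hn _ i => (hT n hn i).le) hp
end

section
/- Let R be a commutative ring, let J ⊆ R be a finitely generated ideal of linear type (i.e., α_J : Sym_R(J) → R(J) is an isomorphism) and let I = (J,y) for some y ∈ R. Then for every integer p ≥ 2 the following are equivalent: (i) α_{I,p} : Sym_p(I) → I^p is an isomorphism; (ii) α_{I,n} : Sym_n(I) → I^n is an isomorphism for each 2 ≤ n ≤ p. In particular this equivalence holds when either (1) R is reduced and I is two-generated, or (2) R is an integrally closed domain and I is three-generated. -/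
open scoped TensorProduct
open PiTensorProduct

/-!
Write `I = (J, y)` and let `Y` be the class of `y` in `Sym(I)`. The algebra `Sym(I)` is the quotient
of `Sym(J)[X]` by the linear forms `a + c X` with `a + c y = 0`. For an ideal `𝔞` of a polynomial
ring generated by polynomials of degree at most one, `X F ∈ 𝔞` forces `F` to be constant
modulo `𝔞`; hence every element of `Sym(I)` killed by `Y` comes from `Sym(J)`. Now let
`b ∈ Symₚ(I)` be in the kernel of `α_I`, with `α_{I,p+1}` injective. Then `Y b = 0`, so `b` comes
from `Sym(J)`, and it is zero because `J` is of linear type.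

A principal ideal of a reduced ring is of linear type since `a xⁿ = 0` gives `a x = 0`. For
`(x, y)` in an integrally closed domain, a relation `a Yⁿ⁺¹ + X b = 0` in the Rees algebra makes
`a y / x` integral, so `x ∣ a y`, and a factor `X` can be cancelled from the relation.
-/

namespace AlmostLinearType

section IdempotentPowers

theorem add_pow_succ_of_idem {S : Type*} [IdemCommSemiring S] (a b : S) (n : ℕ) :
    (a + b) ^ (n + 1) = a ^ (n + 1) + b * (a + b) ^ n := by
  induction n with
  | zero => simp
  | succ n ih =>
    calc (a + b) ^ (n + 2) = a * (a + b) ^ (n + 1) + b * (a + b) ^ (n + 1) := by ring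
      _ = a * (a ^ (n + 1) + b * (a + b) ^ n) + b * (a + b) ^ (n + 1) := by rw [← ih]
      _ = a ^ (n + 2) + b * ((a + a + b) * (a + b) ^ n) := by ring
      _ = a ^ (n + 2) + b * (a + b) ^ (n + 1) := by rw [add_idem, ← pow_succ']

theorem isIntegral_of_pow_succ_mem {R K : Type*} [CommRing R] [CommRing K] [IsDomain K]
    [Algebra R K] {u : K} {n : ℕ} (hu : u ^ (n + 1) ∈ Submodule.span R {1, u} ^ n) :
    IsIntegral R u := by
  set P : Submodule R K := Submodule.span R {1, u} with hP
  have pow_succ_le : P ^ (n + 1) ≤ P ^ n := by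
    have P_eq : P = Submodule.span R {u} + 1 := by
      rw [hP, Set.pair_comm, Submodule.span_insert, Submodule.one_eq_span]; rfl
    conv_lhs => rw [P_eq, add_pow_succ_of_idem, one_mul, ← P_eq]
    refine sup_le ?_ le_rfl
    rw [Submodule.span_pow, Set.singleton_pow, Submodule.span_singleton_le_iff_mem]
    exact hu
  have one_mem : (1 : K) ∈ P := Submodule.subset_span (by simp)
  have u_mem : u ∈ P := Submodule.subset_span (by simp)
  refine isIntegral_of_smul_mem_submodule (P ^ n) ?_ ?_ u fun w hw => pow_succ_le ?_
  · exact (Submodule.ne_bot_iff _).2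
      ⟨1, by simpa using Submodule.pow_mem_pow P one_mem n, one_ne_zero⟩
  · exact (Submodule.fg_span (Set.toFinite _)).pow n
  · rw [pow_succ', smul_eq_mul]
    exact Submodule.mul_mem_mul u_mem hw

end IdempotentPowers

section SymmetricAlgebra

open SymmetricAlgebra

variable {R M : Type*} [CommSemiring R] [AddCommMonoid M] [Module R M] {n : ℕ}

open scoped IsMulCommutative in
theorem exists_algHom_of_commute {A : Type*} [Semiring A] [Algebra R A] (f : M →ₗ[R] A)
    (hf : ∀ x y, Commute (f x) (f y)) :
    ∃ F : SymmetricAlgebra R M →ₐ[R] A, ∀ x, F (ι R M x) = f x := by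
  have : IsMulCommutative (Algebra.adjoin R (Set.range f)) :=
    Algebra.isMulCommutative_adjoin R <| by
      rintro _ ⟨x, rfl⟩ _ ⟨y, rfl⟩
      exact hf x y
  let f' : M →ₗ[R] Algebra.adjoin R (Set.range f) :=
    f.codRestrict (Algebra.adjoin R (Set.range f)).toSubmodule
      fun x => Algebra.subset_adjoin ⟨x, rfl⟩
  refine ⟨(Algebra.adjoin R (Set.range f)).val.comp (lift f'), fun x => ?_⟩
  rw [AlgHom.comp_apply, lift_ι_apply]
  rfl

variable (R M n) in
/-- The homogeneous component of degree `n` of the symmetric algebra, as the `n`-th power of the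
submodule of linear forms. -/
def symDegree : Submodule R (SymmetricAlgebra R M) :=
  LinearMap.range (ι R M) ^ n

theorem ι_mul_mem_symDegree (x : M) {b : SymmetricAlgebra R M} (hb : b ∈ symDegree R M n) :
    ι R M x * b ∈ symDegree R M (n + 1) := by
  rw [symDegree, pow_succ']
  exact Submodule.mul_mem_mul ⟨x, rfl⟩ hb

theorem map_mem_pow_of_mem_symDegree {A : Type*} [CommSemiring A] [Algebra R A]
    {P : Submodule R A} {φ : SymmetricAlgebra R M →ₐ[R] A}
    (hφ : ∀ x, φ (ι R M x) ∈ P) {b : SymmetricAlgebra R M}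
    (hb : b ∈ symDegree R M n) : φ b ∈ P ^ n := by
  have map_range_le : (LinearMap.range (ι R M)).map φ.toLinearMap ≤ P := by
    rintro _ ⟨_, ⟨x, rfl⟩, rfl⟩
    exact hφ x
  refine pow_le_pow_left' map_range_le n ?_
  rw [← Submodule.map_pow]
  exact Submodule.mem_map_of_mem hb

theorem symDegree_eq_span :
    symDegree R M n =
      Submodule.span R (Set.range fun v : Fin n → M => ∏ i, ι R M (v i)) := by
  rw [symDegree, Submodule.pow_eq_span_pow_set]
  congr 1
  ext b
  rw [Set.mem_pow]
  constructor
  · rintro ⟨w, rfl⟩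
    choose v hv using fun i => (w i).2
    exact ⟨v, by simp only [hv, List.prod_ofFn]⟩
  · rintro ⟨v, rfl⟩
    exact ⟨fun i => ⟨_, v i, rfl⟩, List.prod_ofFn⟩

theorem iSup_symDegree : ⨆ n, symDegree R M n = ⊤ := by
  refine (Submodule.eq_top_iff').2 fun b => ?_
  induction b using SymmetricAlgebra.induction with
  | algebraMap r =>
    refine Submodule.mem_iSup_of_mem 0 ?_
    rw [symDegree, pow_zero]
    exact Submodule.algebraMap_mem r
  | ι x =>
    refine Submodule.mem_iSup_of_mem 1 ?_
    rw [symDegree, pow_one]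
    exact ⟨x, rfl⟩
  | mul a b ha hb =>
    have hab := Submodule.mul_mem_mul ha hb
    simp only [Submodule.iSup_mul, Submodule.mul_iSup] at hab
    refine (iSup_le fun k => iSup_le fun l => ?_ : (_ : Submodule R _) ≤ _) hab
    rw [symDegree, symDegree, ← pow_add]
    exact le_iSup (symDegree R M) _
  | add a b ha hb => exact add_mem ha hb

theorem symDegree_eq_span_of_span_singleton {x : M} (hx : Submodule.span R {x} = ⊤) (n : ℕ) :
    symDegree R M n = Submodule.span R {ι R M x ^ n} := by
  rw [symDegree, LinearMap.range_eq_map, ← hx, Submodule.map_span, Set.image_singleton,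
    Submodule.span_pow, Set.singleton_pow]

theorem symDegree_succ_of_span_pair {x y : M} (hxy : Submodule.span R {x, y} = ⊤) (n : ℕ) :
    symDegree R M (n + 1) =
      Submodule.span R {ι R M y ^ (n + 1)} ⊔ Submodule.span R {ι R M x} * symDegree R M n := by
  have range_ι : LinearMap.range (ι R M) =
      Submodule.span R {ι R M y} + Submodule.span R {ι R M x} := by
    rw [LinearMap.range_eq_map, ← hxy, Submodule.map_span, Set.image_pair, Set.pair_comm,
      Submodule.span_insert, Submodule.add_eq_sup]
  rw [symDegree, symDegree, range_ι, add_pow_succ_of_idem, Submodule.span_pow, Set.singleton_pow,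
    Submodule.add_eq_sup]

end SymmetricAlgebra

section LinearGenerators

open Polynomial

theorem divX_mul {A : Type*} [CommSemiring A] (p q : A[X]) :
    divX (p * q) = divX p * q + C (p.coeff 0) * divX q := by
  conv_lhs => rw [← divX_mul_X_add p, add_mul, divX_add, divX_C_mul, mul_right_comm]
  congr 1
  ext n
  simp

variable {A : Type*} [CommRing A]

theorem exists_divX_sub_C_mem_span {T : Set A[X]} (hT : ∀ g ∈ T, g.natDegree ≤ 1) {F : A[X]}
    (hF : F ∈ Ideal.span T) : ∃ a, divX F - C a ∈ Ideal.span T := by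
  induction hF using Submodule.span_induction with
  | mem g hg =>
    have divX_eq_C : divX g = C ((divX g).coeff 0) := by
      apply eq_C_of_natDegree_eq_zero
      rw [natDegree_divX_eq_natDegree_tsub_one, Nat.sub_eq_zero_of_le (hT g hg)]
    exact ⟨(divX g).coeff 0, by rw [← divX_eq_C, sub_self]; exact zero_mem _⟩
  | zero => exact ⟨0, by simp⟩
  | add F G _ _ hF hG =>
    obtain ⟨a, ha⟩ := hF
    obtain ⟨b, hb⟩ := hG
    refine ⟨a + b, ?_⟩
    rw [divX_add, C_add, add_sub_add_comm]
    exact add_mem ha hb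
  | smul p F hF ih =>
    obtain ⟨a, ha⟩ := ih
    refine ⟨p.coeff 0 * a, ?_⟩
    have divX_sub_C : divX (p • F) - C (p.coeff 0 * a) =
        divX p * F + C (p.coeff 0) * (divX F - C a) := by
      rw [smul_eq_mul, divX_mul, C_mul]
      ring
    rw [divX_sub_C]
    exact add_mem (Ideal.mul_mem_left _ _ hF) (Ideal.mul_mem_left _ _ ha)

theorem exists_sub_C_mem_span_of_X_mul_mem_span {T : Set A[X]} (hT : ∀ g ∈ T, g.natDegree ≤ 1)
    {F : A[X]} (hF : X * F ∈ Ideal.span T) : ∃ a, F - C a ∈ Ideal.span T := by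
  have divX_X_mul : divX (X * F) = F := by ext n; simp
  simpa only [divX_X_mul] using exists_divX_sub_C_mem_span hT hF

end LinearGenerators

section Presentation

open Polynomial SymmetricAlgebra

variable {R M N P : Type*} [CommRing R] [AddCommGroup M] [Module R M] [AddCommGroup N]
  [Module R N] [AddCommGroup P] [Module R P]

theorem exists_algHom_ι_eq {B : Type*} [CommRing B] [Algebra R B] {e : P →ₗ[R] M}
    (he : Function.Surjective e) {d : P →ₗ[R] B} (hd : LinearMap.ker e ≤ LinearMap.ker d) :
    ∃ τ : SymmetricAlgebra R M →ₐ[R] B, ∀ p, τ (ι R M (e p)) = d p := by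
  refine ⟨lift ((LinearMap.ker e).liftQ d hd ∘ₗ (e.quotKerEquivOfSurjective he).symm),
    fun p => ?_⟩
  have preimage_e : (e.quotKerEquivOfSurjective he).symm (e p) = Submodule.Quotient.mk p :=
    (LinearEquiv.symm_apply_eq _).2 rfl
  simp [preimage_e]

variable (R N) in
/-- The linear form `n + c X` over `Sym(N)` attached to `(n, c)`. -/
noncomputable def linearForm : N × R →ₗ[R] (SymmetricAlgebra R N)[X] :=
  ((CAlgHom (R := R)).toLinearMap ∘ₗ ι R N).coprod (LinearMap.toSpanSingleton R _ X)

@[simp]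
theorem linearForm_apply (n : N) (c : R) : linearForm R N (n, c) = C (ι R N n) + c • X := by
  simp [linearForm]

theorem natDegree_linearForm_le (z : N × R) : (linearForm R N z).natDegree ≤ 1 := by
  rw [← Prod.mk.eta (p := z), linearForm_apply]
  compute_degree

variable (f : N →ₗ[R] M) (y : M)

/-- The map `Sym(N)[X] → Sym(M)` induced by `f : N → M` and `X ↦ y`. -/
noncomputable def adjoinMap : (SymmetricAlgebra R N)[X] →ₐ[R] SymmetricAlgebra R M :=
  aevalTower (lift (ι R M ∘ₗ f)) (ι R M y)

theorem adjoinMap_linearForm (z : N × R) :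
    adjoinMap f y (linearForm R N z) = ι R M (f.coprod (LinearMap.toSpanSingleton R M y) z) := by
  rw [← Prod.mk.eta (p := z), linearForm_apply]
  simp [adjoinMap]

variable {f y}

theorem adjoinMap_surjective
    (hfy : Function.Surjective (f.coprod (LinearMap.toSpanSingleton R M y))) :
    Function.Surjective (adjoinMap f y) := by
  intro b
  induction b using SymmetricAlgebra.induction with
  | algebraMap r => exact ⟨algebraMap R _ r, AlgHom.commutes _ r⟩
  | ι x =>
    obtain ⟨z, rfl⟩ := hfy x
    exact ⟨linearForm R N z, adjoinMap_linearForm f y z⟩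
  | mul a b ha hb =>
    obtain ⟨⟨F, rfl⟩, G, rfl⟩ := ha, hb
    exact ⟨F * G, map_mul _ F G⟩
  | add a b ha hb =>
    obtain ⟨⟨F, rfl⟩, G, rfl⟩ := ha, hb
    exact ⟨F + G, map_add _ F G⟩

theorem exists_comp_adjoinMap_eq {B : Type*} [CommRing B] [Algebra R B]
    (hfy : Function.Surjective (f.coprod (LinearMap.toSpanSingleton R M y)))
    (π : (SymmetricAlgebra R N)[X] →ₐ[R] B)
    (hπ : ∀ z ∈ LinearMap.ker (f.coprod (LinearMap.toSpanSingleton R M y)),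
      π (linearForm R N z) = 0) :
    ∃ τ : SymmetricAlgebra R M →ₐ[R] B, τ.comp (adjoinMap f y) = π := by
  obtain ⟨τ, hτ⟩ := exists_algHom_ι_eq hfy (d := π.toLinearMap ∘ₗ linearForm R N) hπ
  refine ⟨τ, algHom_ext' (SymmetricAlgebra.algHom_ext (LinearMap.ext fun n => ?_)) ?_⟩
  · simpa [adjoinMap] using hτ (n, 0)
  · simpa [adjoinMap] using hτ (0, 1)

theorem ker_adjoinMap
    (hfy : Function.Surjective (f.coprod (LinearMap.toSpanSingleton R M y))) :
    RingHom.ker (adjoinMap f y) = Ideal.span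
      (linearForm R N '' LinearMap.ker (f.coprod (LinearMap.toSpanSingleton R M y))) := by
  set K := Ideal.span
    (linearForm R N '' LinearMap.ker (f.coprod (LinearMap.toSpanSingleton R M y)))
  refine le_antisymm (fun F hF => ?_) (Ideal.span_le.2 ?_)
  · obtain ⟨τ, hτ⟩ := exists_comp_adjoinMap_eq (B := (SymmetricAlgebra R N)[X] ⧸ K) hfy
      (Ideal.Quotient.mkₐ R K) fun z hz => Ideal.Quotient.eq_zero_iff_mem.2
        (Ideal.subset_span (Set.mem_image_of_mem _ hz))
    rw [← Ideal.Quotient.eq_zero_iff_mem, ← Ideal.Quotient.mkₐ_eq_mk R, ← hτ,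
      AlgHom.comp_apply, RingHom.mem_ker.1 hF, map_zero]
  · rintro _ ⟨z, hz, rfl⟩
    rw [SetLike.mem_coe, RingHom.mem_ker, adjoinMap_linearForm, LinearMap.mem_ker.1 hz, map_zero]

theorem mem_range_lift_of_ι_mul_eq_zero
    (hfy : Function.Surjective (f.coprod (LinearMap.toSpanSingleton R M y)))
    {b : SymmetricAlgebra R M} (hb : ι R M y * b = 0) :
    b ∈ (lift (ι R M ∘ₗ f)).range := by
  obtain ⟨F, rfl⟩ := adjoinMap_surjective hfy b
  have X_mul_mem : X * F ∈ RingHom.ker (adjoinMap f y) := by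
    rw [RingHom.mem_ker, map_mul, ← hb, adjoinMap, aevalTower_X]
  rw [ker_adjoinMap hfy] at X_mul_mem
  obtain ⟨s, hs⟩ := exists_sub_C_mem_span_of_X_mul_mem_span
    (by rintro _ ⟨z, -, rfl⟩; exact natDegree_linearForm_le z) X_mul_mem
  rw [← ker_adjoinMap hfy, RingHom.sub_mem_ker_iff] at hs
  exact ⟨s, by rw [hs, adjoinMap, aevalTower_C]; rfl⟩

end Presentation

section SymPow

variable {R : Type*} [CommRing R] {I : Ideal R} {n : ℕ} {N : Type*} [AddCommGroup N] [Module R N]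

variable (I n) in
/-- The product `(v₁, …, vₙ) ↦ v₁ ⋯ vₙ ∈ Symₙ(I)` as a multilinear map. -/
noncomputable def symTprod : MultilinearMap R (fun _ : Fin n => ↥I) (SymPow R I n) :=
  (symRel R I n).mkQ.compMultilinearMap (tprod R)

theorem symTprod_comp_perm (v : Fin n → ↥I) (σ : Equiv.Perm (Fin n)) :
    symTprod I n (v ∘ σ) = symTprod I n v :=
  ((Submodule.Quotient.eq (symRel R I n)).2 (Submodule.subset_span ⟨v, σ, rfl⟩)).symm

theorem symPow_hom_ext {f g : SymPow R I n →ₗ[R] N}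
    (h : ∀ v, f (symTprod I n v) = g (symTprod I n v)) : f = g :=
  Submodule.linearMap_qext _ (PiTensorProduct.ext (MultilinearMap.ext h))

/-- The linear map on `Symₙ(I)` induced by a symmetric multilinear map. -/
noncomputable def symPowLift (φ : MultilinearMap R (fun _ : Fin n => ↥I) N)
    (hφ : ∀ v (σ : Equiv.Perm (Fin n)), φ (v ∘ σ) = φ v) : SymPow R I n →ₗ[R] N :=
  (symRel R I n).liftQ (PiTensorProduct.lift φ) <| Submodule.span_le.2 <| by
    rintro _ ⟨v, σ, rfl⟩
    simp only [SetLike.mem_coe, LinearMap.mem_ker, map_sub, lift.tprod, hφ, sub_self]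

@[simp]
theorem symPowLift_symTprod (φ : MultilinearMap R (fun _ : Fin n => ↥I) N)
    (hφ : ∀ v (σ : Equiv.Perm (Fin n)), φ (v ∘ σ) = φ v) (v : Fin n → ↥I) :
    symPowLift φ hφ (symTprod I n v) = φ v :=
  lift.tprod v

theorem alphaCan_symTprod (v : Fin n → ↥I) :
    alphaCan R I n (symTprod I n v) = ∏ i, (v i : R) := by
  simp [alphaCan, symTprod, prodML]

theorem cons_comp_perm {α : Type*} (x : α) (v : Fin n → α) (σ : Equiv.Perm (Fin n)) :
    (Fin.cons x (v ∘ σ) : Fin (n + 1) → α) =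
      Fin.cons x v ∘ Equiv.Perm.decomposeFin.symm (0, σ) := by
  funext i
  cases i using Fin.cases <;> simp

theorem cons_cons_comp_swap {α : Type*} (x y : α) (v : Fin n → α) :
    (Fin.cons x (Fin.cons y v) : Fin (n + 2) → α) ∘ Equiv.swap 0 1 =
      Fin.cons y (Fin.cons x v) := by
  funext i
  cases i using Fin.cases with
  | zero => simp
  | succ i =>
    cases i using Fin.cases with
    | zero => simp
    | succ i => simp [Equiv.swap_apply_def, Fin.ext_iff]

theorem curryLeft_symTprod_comp_perm (x : ↥I) (v : Fin n → ↥I) (σ : Equiv.Perm (Fin n)) :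
    (symTprod I (n + 1)).curryLeft x (v ∘ σ) = (symTprod I (n + 1)).curryLeft x v :=
  (congrArg _ (cons_comp_perm x v σ)).trans (symTprod_comp_perm _ _)

variable (I n) in
/-- Multiplication `I × Symₙ(I) → Symₙ₊₁(I)` by an element of degree one. -/
noncomputable def symMul : ↥I →ₗ[R] SymPow R I n →ₗ[R] SymPow R I (n + 1) where
  toFun x := symPowLift ((symTprod I (n + 1)).curryLeft x) (curryLeft_symTprod_comp_perm x)
  map_add' x y := symPow_hom_ext fun v => by
    simp only [LinearMap.add_apply, add_apply, symPowLift_symTprod, map_add]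
  map_smul' r x := symPow_hom_ext fun v => by
    simp only [LinearMap.smul_apply, smul_apply, symPowLift_symTprod, map_smul,
      RingHom.id_apply]

theorem symMul_symTprod (x : ↥I) (v : Fin n → ↥I) :
    symMul I n x (symTprod I n v) = symTprod I (n + 1) (Fin.cons x v) :=
  symPowLift_symTprod _ (curryLeft_symTprod_comp_perm x) v

theorem symMul_comm (x y : ↥I) (s : SymPow R I n) :
    symMul I (n + 1) x (symMul I n y s) = symMul I (n + 1) y (symMul I n x s) := by
  suffices h : symMul I (n + 1) x ∘ₗ symMul I n y = symMul I (n + 1) y ∘ₗ symMul I n x from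
    LinearMap.congr_fun h s
  refine symPow_hom_ext fun v => ?_
  simp only [LinearMap.comp_apply, symMul_symTprod]
  rw [← cons_cons_comp_swap, symTprod_comp_perm]

variable (I) in
/-- The degree-raising operators `s ↦ x · s` on `∏ₖ Symₖ(I)`. -/
noncomputable def raise : ↥I →ₗ[R] Module.End R (∀ k, SymPow R I k) where
  toFun x := LinearMap.pi fun
    | 0 => 0
    | k + 1 => symMul I k x ∘ₗ LinearMap.proj k
  map_add' x y := by ext s (_ | k) <;> simp
  map_smul' r x := by ext s (_ | k) <;> simp

theorem raise_single (x : ↥I) (s : SymPow R I n) :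
    raise I x (Pi.single n s) = Pi.single (n + 1) (symMul I n x s) := by
  funext k
  rcases k with _ | k
  · simp [raise]
  · obtain rfl | hk := eq_or_ne k n
    · simp [raise]
    · simp [raise, hk]

theorem commute_raise (x y : ↥I) : Commute (raise I x) (raise I y) := by
  refine LinearMap.ext fun s => funext fun k => ?_
  rcases k with _ | _ | k
  · rfl
  · simp [raise]
  · exact symMul_comm x y (s k)

end SymPow

section Comparison

variable {R : Type*} [CommRing R] {I : Ideal R} {n : ℕ}

variable (I n) in
/-- The canonical map from `Symₙ(I)` to the symmetric algebra of `I`. -/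
noncomputable def symPowToSym : SymPow R I n →ₗ[R] SymmetricAlgebra R ↥I :=
  symPowLift ((MultilinearMap.mkPiAlgebra R (Fin n) (SymmetricAlgebra R ↥I)).compLinearMap
    fun _ => SymmetricAlgebra.ι R ↥I) fun v σ =>
      Equiv.prod_comp σ fun i => SymmetricAlgebra.ι R ↥I (v i)

theorem symPowToSym_symTprod (v : Fin n → ↥I) :
    symPowToSym I n (symTprod I n v) = ∏ i, SymmetricAlgebra.ι R ↥I (v i) :=
  symPowLift_symTprod _ _ v

-- The raising operators make `∏ₖ Symₖ(I)` a module over the symmetric algebra, and letting the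
-- image of `z ∈ Symₙ(I)` act on `1 ∈ Sym₀(I)` gives back `z`.
theorem symPowToSym_injective : Function.Injective (symPowToSym I n) := by
  obtain ⟨act, act_ι⟩ := exists_algHom_of_commute (R := R) (M := ↥I)
    (A := Module.End R (∀ k, SymPow R I k)) (raise I) commute_raise
  let unit : ∀ k, SymPow R I k := Pi.single 0 (symTprod I 0 Fin.elim0)
  have act_prod_ι : ∀ k (v : Fin k → ↥I),
      act (∏ i, SymmetricAlgebra.ι R ↥I (v i)) unit = Pi.single k (symTprod I k v) := by
    intro k
    induction k with
    | zero =>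
      intro v
      rw [Subsingleton.elim v Fin.elim0, Fin.prod_univ_zero, map_one, Module.End.one_apply]
    | succ k ih =>
      intro v
      rw [Fin.prod_univ_succ, map_mul, Module.End.mul_apply, ih, act_ι, raise_single,
        symMul_symTprod]
      exact congrArg _ (congrArg _ (Fin.cons_self_tail v))
  let retraction : SymmetricAlgebra R ↥I →ₗ[R] SymPow R I n :=
    LinearMap.proj n ∘ₗ LinearMap.applyₗ unit ∘ₗ act.toLinearMap
  have retraction_comp : retraction ∘ₗ symPowToSym I n = LinearMap.id :=
    symPow_hom_ext fun v => by
      simp [retraction, symPowToSym_symTprod, act_prod_ι]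
  exact LinearMap.injective_of_comp_eq_id _ _ retraction_comp

end Comparison

section Rees

open Polynomial

variable {R : Type*} [CommRing R] {I : Ideal R} {n : ℕ}

theorem range_symPowToSym : LinearMap.range (symPowToSym I n) = symDegree R ↥I n := by
  have span_symTprod : Submodule.span R (Set.range (symTprod I n)) = ⊤ := by
    rw [symTprod, LinearMap.coe_compMultilinearMap, Set.range_comp, ← Submodule.map_span,
      span_tprod_eq_top, Submodule.map_top, Submodule.range_mkQ]
  rw [LinearMap.range_eq_map, ← span_symTprod, Submodule.map_span, symDegree_eq_span,
    ← Set.range_comp]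
  congr 2
  exact funext fun v => symPowToSym_symTprod v

variable (I) in
/-- The canonical map `α_I` from the symmetric algebra of `I` to the Rees algebra of `I`,
composed with the inclusion of the latter in `R[X]`. -/
noncomputable def reesMap : SymmetricAlgebra R ↥I →ₐ[R] R[X] :=
  SymmetricAlgebra.lift (monomial 1 ∘ₗ I.subtype)

@[simp]
theorem reesMap_ι (x : ↥I) : reesMap I (SymmetricAlgebra.ι R ↥I x) = monomial 1 (x : R) :=
  SymmetricAlgebra.lift_ι_apply _ x

theorem reesMap_symPowToSym (z : SymPow R I n) :
    reesMap I (symPowToSym I n z) = monomial n (alphaCan R I n z) := by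
  suffices h : (reesMap I).toLinearMap ∘ₗ symPowToSym I n = monomial n ∘ₗ alphaCan R I n from
    LinearMap.congr_fun h z
  refine symPow_hom_ext fun v => ?_
  simp [symPowToSym_symTprod, alphaCan_symTprod, ← C_mul_X_pow_eq_monomial,
    Finset.prod_mul_distrib]

theorem injective_alphaCan_iff :
    Function.Injective (alphaCan R I n) ↔
      ∀ b ∈ symDegree R ↥I n, reesMap I b = 0 → b = 0 := by
  rw [← range_symPowToSym, injective_iff_map_eq_zero]
  constructor
  · rintro hα _ ⟨z, rfl⟩ hz
    rw [reesMap_symPowToSym, monomial_eq_zero_iff] at hz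
    rw [hα z hz, map_zero]
  · intro hdeg z hz
    refine (map_eq_zero_iff _ symPowToSym_injective).1 (hdeg _ ⟨z, rfl⟩ ?_)
    rw [reesMap_symPowToSym, hz, map_zero]

theorem injective_alphaCan_zero : Function.Injective (alphaCan R I 0) := by
  rw [injective_alphaCan_iff, symDegree, pow_zero]
  intro b hb hb_rees
  obtain ⟨r, rfl⟩ := Submodule.mem_one.1 hb
  rw [AlgHom.commutes, algebraMap_eq, C_eq_zero] at hb_rees
  rw [hb_rees, map_zero]

theorem exists_reesMap_eq_monomial {b : SymmetricAlgebra R ↥I} (hb : b ∈ symDegree R ↥I n) :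
    ∃ r, reesMap I b = monomial n r := by
  obtain ⟨z, rfl⟩ := range_symPowToSym.ge hb
  exact ⟨_, reesMap_symPowToSym z⟩

theorem reesMap_injective (hα : ∀ n, Function.Injective (alphaCan R I n)) :
    Function.Injective (reesMap I) := by
  refine (injective_iff_map_eq_zero _).2 fun b hb => ?_
  obtain ⟨f, hf, rfl⟩ := (Submodule.mem_iSup_iff_exists_finsupp (symDegree R ↥I) b).1
    (iSup_symDegree.ge Submodule.mem_top)
  refine Finset.sum_eq_zero fun n hn => injective_alphaCan_iff.1 (hα n) (f n) (hf n) ?_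
  choose r hr using fun k => exists_reesMap_eq_monomial (hf k)
  have r_eq_zero : r n = 0 := by
    have coeff_reesMap := congrArg (coeff · n) hb
    simpa [Finsupp.sum, hr, coeff_monomial, Finsupp.mem_support_iff.1 hn] using coeff_reesMap
  rw [hr, r_eq_zero, map_zero]

end Rees

section Descent

open SymmetricAlgebra

variable {R : Type*} [CommRing R] {I J : Ideal R}

theorem reesMap_lift_inclusion (h : J ≤ I) (s : SymmetricAlgebra R ↥J) :
    reesMap I (lift (ι R ↥I ∘ₗ Submodule.inclusion h) s) = reesMap J s := by
  suffices hcomp : (reesMap I).comp (lift (ι R ↥I ∘ₗ Submodule.inclusion h)) = reesMap J from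
    AlgHom.congr_fun hcomp s
  refine SymmetricAlgebra.algHom_ext (LinearMap.ext fun x => ?_)
  simp

theorem injective_alphaCan_of_succ (hJ : ∀ n, Function.Injective (alphaCan R J n)) {y : R} {p : ℕ}
    (hp : Function.Injective (alphaCan R (J ⊔ Ideal.span {y}) (p + 1))) :
    Function.Injective (alphaCan R (J ⊔ Ideal.span {y}) p) := by
  rw [injective_alphaCan_iff] at hp ⊢
  intro b hb hb_rees
  let y' : ↥(J ⊔ Ideal.span {y}) := ⟨y, Ideal.mem_sup_right (Ideal.mem_span_singleton_self y)⟩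
  have hgen : Function.Surjective ((Submodule.inclusion le_sup_left).coprod
      (LinearMap.toSpanSingleton R ↥(J ⊔ Ideal.span {y}) y')) := by
    rintro ⟨x, hx⟩
    obtain ⟨j, hj, _, hc, rfl⟩ := Submodule.mem_sup.1 hx
    obtain ⟨c, rfl⟩ := Ideal.mem_span_singleton'.1 hc
    exact ⟨(⟨j, hj⟩, c), by ext; simp [y']⟩
  have y_mul_eq_zero : ι R _ y' * b = 0 :=
    hp _ (ι_mul_mem_symDegree y' hb) (by rw [map_mul, hb_rees, mul_zero])
  obtain ⟨s, rfl⟩ := mem_range_lift_of_ι_mul_eq_zero hgen y_mul_eq_zero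
  have s_eq_zero : s = 0 := by
    refine (map_eq_zero_iff _ (reesMap_injective hJ)).1 ?_
    rw [← hb_rees]
    exact (reesMap_lift_inclusion le_sup_left s).symm
  rw [s_eq_zero, map_zero]

theorem injective_alphaCan_iff_forall_le (hJ : ∀ n, Function.Injective (alphaCan R J n)) {y : R}
    {m p : ℕ} (hmp : m ≤ p) :
    Function.Injective (alphaCan R (J ⊔ Ideal.span {y}) p) ↔
      ∀ n, m ≤ n → n ≤ p → Function.Injective (alphaCan R (J ⊔ Ideal.span {y}) n) :=
  ⟨fun h _ _ hnp => Nat.decreasingInduction' (fun _ _ _ => injective_alphaCan_of_succ hJ) hnp h,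
    fun h => h p hmp le_rfl⟩

end Descent

section LinearType

open Polynomial SymmetricAlgebra

variable {R : Type*} [CommRing R] {I : Ideal R}

theorem injective_alphaCan_of_span_singleton [IsReduced R] {x : ↥I}
    (hx : Submodule.span R {x} = ⊤) (n : ℕ) : Function.Injective (alphaCan R I n) := by
  rcases n with _ | n
  · exact injective_alphaCan_zero
  rw [injective_alphaCan_iff, symDegree_eq_span_of_span_singleton hx]
  intro b hb hb_rees
  obtain ⟨a, rfl⟩ := Submodule.mem_span_singleton.1 hb
  have a_mul_pow : a * (x : R) ^ (n + 1) = 0 := by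
    simpa [monomial_pow, smul_monomial] using hb_rees
  have a_smul_x : a • x = 0 := by
    refine Subtype.ext (eq_zero_of_pow_eq_zero (n := n + 1) ?_)
    calc (a * (x : R)) ^ (n + 1) = a ^ n * (a * (x : R) ^ (n + 1)) := by ring
      _ = 0 := by rw [a_mul_pow, mul_zero]
  rw [pow_succ', ← smul_mul_assoc, ← map_smul, a_smul_x, map_zero, zero_mul]

variable [IsDomain R] [IsIntegrallyClosed R] {x y : ↥I}

-- `u := a y / x` is integral: the substitution `T ↦ a / x` in the Rees algebra sends `X` to `a`
-- and `Y` to `u`, so the relation becomes `u ^ (n + 1) ∈ (R a + R u) ^ n`.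
theorem dvd_of_reesMap_eq_zero (hxy : Submodule.span R {x, y} = ⊤) (hx : (x : R) ≠ 0) {n : ℕ}
    {a : R} {b : SymmetricAlgebra R ↥I} (hb : b ∈ symDegree R ↥I n)
    (h : reesMap I (a • ι R ↥I y ^ (n + 1) + ι R ↥I x * b) = 0) : (x : R) ∣ a * y := by
  obtain rfl | ha := eq_or_ne a 0
  · simp
  let K := FractionRing R
  have algebraMap_ne_zero : ∀ {r : R}, r ≠ 0 → algebraMap R K r ≠ 0 := by simp [K]
  let ψ : SymmetricAlgebra R ↥I →ₐ[R] K :=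
    (aeval (algebraMap R K a / algebraMap R K x)).comp (reesMap I)
  have ψ_ι (z : ↥I) : ψ (ι R ↥I z) = algebraMap R K z * (algebraMap R K a / algebraMap R K x) := by
    simp [ψ, aeval_monomial]
  have ψ_x : ψ (ι R ↥I x) = algebraMap R K a := by
    rw [ψ_ι, mul_div_cancel₀ _ (algebraMap_ne_zero hx)]
  have ψ_ι_mem (z : ↥I) : ψ (ι R ↥I z) ∈ Submodule.span R {1, ψ (ι R ↥I y)} := by
    obtain ⟨c, d, rfl⟩ := Submodule.mem_span_pair.1 (hxy.ge (Submodule.mem_top (x := z)))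
    refine Submodule.mem_span_pair.2 ⟨c * a, d, ?_⟩
    simp [ψ_x, Algebra.smul_def]
  have ψ_b_mem : ψ b ∈ Submodule.span R {1, ψ (ι R ↥I y)} ^ n :=
    map_mem_pow_of_mem_symDegree ψ_ι_mem hb
  have ψ_y_pow : ψ (ι R ↥I y) ^ (n + 1) = -ψ b := by
    have ψ_relation : ψ (a • ι R ↥I y ^ (n + 1) + ι R ↥I x * b) = 0 := by
      rw [AlgHom.comp_apply, h, map_zero]
    refine mul_left_cancel₀ (algebraMap_ne_zero ha) ?_
    rw [map_add, map_smul, map_mul, map_pow, ψ_x, Algebra.smul_def] at ψ_relation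
    linear_combination ψ_relation
  obtain ⟨d, hd⟩ := IsIntegrallyClosed.isIntegral_iff.1
    (isIntegral_of_pow_succ_mem (ψ_y_pow ▸ neg_mem ψ_b_mem))
  refine ⟨d, FaithfulSMul.algebraMap_injective R K ?_⟩
  rw [map_mul, map_mul, hd, ψ_ι, mul_left_comm, mul_div_cancel₀ _ (algebraMap_ne_zero hx),
    mul_comm]

theorem injective_alphaCan_of_span_pair (hxy : Submodule.span R {x, y} = ⊤) (n : ℕ) :
    Function.Injective (alphaCan R I n) := by
  obtain hx | hx := eq_or_ne x 0
  · rw [hx, Submodule.span_insert_zero] at hxy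
    exact injective_alphaCan_of_span_singleton hxy n
  have hx' : (x : R) ≠ 0 := by simpa using hx
  rw [injective_alphaCan_iff]
  induction n with
  | zero => exact injective_alphaCan_iff.1 injective_alphaCan_zero
  | succ n ih =>
    intro b hb hb_rees
    rw [symDegree_succ_of_span_pair hxy] at hb
    obtain ⟨_, hay, _, hxb, rfl⟩ := Submodule.mem_sup.1 hb
    obtain ⟨a, rfl⟩ := Submodule.mem_span_singleton.1 hay
    obtain ⟨b', hb', rfl⟩ := Submodule.mem_span_singleton_mul.1 hxb
    obtain ⟨d, hd⟩ := dvd_of_reesMap_eq_zero hxy hx' hb' hb_rees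
    have a_smul_y : a • y = d • x := Subtype.ext (by simpa [mul_comm d] using hd)
    have factor : a • ι R ↥I y ^ (n + 1) + ι R ↥I x * b' =
        ι R ↥I x * (d • ι R ↥I y ^ n + b') := by
      rw [pow_succ', ← smul_mul_assoc, ← map_smul, a_smul_y, map_smul, mul_add, smul_mul_assoc,
        mul_smul_comm]
    rw [factor, map_mul, mul_eq_zero] at hb_rees
    rw [factor, ih _ _ (hb_rees.resolve_left _), mul_zero]
    · have y_pow_mem := Submodule.pow_mem_pow _ (LinearMap.mem_range_self (ι R ↥I) y) n
      exact add_mem (Submodule.smul_mem _ d y_pow_mem) hb'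
    · simpa using hx'

theorem injective_alphaCan_span_singleton {R : Type*} [CommRing R] [IsReduced R] (x : R) (n : ℕ) :
    Function.Injective (alphaCan R (Ideal.span {x}) n) := by
  refine injective_alphaCan_of_span_singleton
    (x := ⟨x, Ideal.mem_span_singleton_self x⟩) (Submodule.eq_top_iff'.2 ?_) n
  rintro ⟨z, hz⟩
  obtain ⟨c, rfl⟩ := Ideal.mem_span_singleton'.1 hz
  exact Submodule.mem_span_singleton.2 ⟨c, rfl⟩

theorem injective_alphaCan_span_pair (x y : R) (n : ℕ) :
    Function.Injective (alphaCan R (Ideal.span {x, y}) n) := by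
  refine injective_alphaCan_of_span_pair (x := ⟨x, Ideal.subset_span (by simp)⟩)
    (y := ⟨y, Ideal.subset_span (by simp)⟩) (Submodule.eq_top_iff'.2 ?_) n
  rintro ⟨z, hz⟩
  obtain ⟨c, d, rfl⟩ := Ideal.mem_span_pair.1 hz
  exact Submodule.mem_span_pair.2 ⟨c, d, rfl⟩

end LinearType

end AlmostLinearType

theorem statement18_general {R : Type*} [CommRing R] :
    (∀ J : Ideal R, (∀ n : ℕ, Function.Injective (alphaCan R J n)) →
      ∀ y : R, ∀ p, 2 ≤ p →
        (Function.Injective (alphaCan R (J ⊔ Ideal.span {y}) p) ↔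
          ∀ n, 2 ≤ n → n ≤ p →
            Function.Injective (alphaCan R (J ⊔ Ideal.span {y}) n))) ∧
    (IsReduced R → ∀ x y : R, ∀ p, 2 ≤ p →
      (Function.Injective (alphaCan R (Ideal.span {x, y}) p) ↔
        ∀ n, 2 ≤ n → n ≤ p →
          Function.Injective (alphaCan R (Ideal.span {x, y}) n))) ∧
    (IsDomain R → IsIntegrallyClosed R → ∀ x y z : R, ∀ p, 2 ≤ p →
      (Function.Injective (alphaCan R (Ideal.span {x, y, z}) p) ↔
        ∀ n, 2 ≤ n → n ≤ p →
          Function.Injective (alphaCan R (Ideal.span {x, y, z}) n))) := by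
  refine ⟨fun J hJ y p hp => AlmostLinearType.injective_alphaCan_iff_forall_le hJ hp,
    fun _ x y p hp => ?_, fun _ _ x y z p hp => ?_⟩
  · rw [Ideal.span_insert]
    exact AlmostLinearType.injective_alphaCan_iff_forall_le
      (AlmostLinearType.injective_alphaCan_span_singleton x) hp
  · have span_triple : Ideal.span {x, y, z} = Ideal.span {x, y} ⊔ Ideal.span {z} := by
      rw [← Ideal.span_union, Set.insert_union, Set.singleton_union]
    rw [span_triple]
    exact AlmostLinearType.injective_alphaCan_iff_forall_le
      (AlmostLinearType.injective_alphaCan_span_pair x y) hp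

/-- Ideals of almost-linear type.  If `J` is a finitely generated ideal of linear type
(all components of `α_J` are isomorphisms) and `I = (J,y)`, then for every `p ≥ 2`:
`α_{I,p}` is an isomorphism iff `α_{I,n}` is an isomorphism for each `2 ≤ n ≤ p`.
In particular this equivalence holds when (1) `R` is reduced and `I` is two-generated,
or (2) `R` is an integrally closed domain and `I` is three-generated. -/
theorem statement18 {R : Type*} [CommRing R] :
    (∀ J : Ideal R, J.FG → (∀ n : ℕ, Function.Injective (alphaCan R J n)) →
      ∀ y : R, ∀ p, 2 ≤ p →
        (Function.Injective (alphaCan R (J ⊔ Ideal.span {y}) p) ↔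
          ∀ n, 2 ≤ n → n ≤ p →
            Function.Injective (alphaCan R (J ⊔ Ideal.span {y}) n))) ∧
    (IsReduced R → ∀ x y : R, ∀ p, 2 ≤ p →
      (Function.Injective (alphaCan R (Ideal.span {x, y}) p) ↔
        ∀ n, 2 ≤ n → n ≤ p →
          Function.Injective (alphaCan R (Ideal.span {x, y}) n))) ∧
    (IsDomain R → IsIntegrallyClosed R → ∀ x y z : R, ∀ p, 2 ≤ p →
      (Function.Injective (alphaCan R (Ideal.span {x, y, z}) p) ↔
        ∀ n, 2 ≤ n → n ≤ p →
          Function.Injective (alphaCan R (Ideal.span {x, y, z}) n))) :=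
  ⟨fun J _ => statement18_general.1 J, statement18_general.2⟩
end
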